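/- Let S = ((X_1,Y_1),…,(X_n,Y_n)) be an i.i.d. sample, let h be a fixed prediction rule, and let ℓ be a loss function bounded above by 1. Define L(h) = E[ℓ(h(X),Y)], L̂(h,S) = (1/n) Σ_{i=1}^n ℓ(h(X_i),Y_i), and V̂(h,S) = (1/n) Σ_{i=1}^n ℓ(h(X_i),Y_i)². Then for any λ ∈ [0, 1/2], E[exp( n( λ(L(h) − L̂(h,S)) − λ² V̂(h,S) ) )] ≤ 1, where the expectation is over the draw of S. -/

import Mathlib

open MeasureTheory ProbabilityTheory

/-!
For `x ≤ 1/2` one has `exp (-x - x²) ≤ 1 - x`. Inserting a random variable `Z ≤ 1/2` and taking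
expectations gives `E[exp (-Z - Z²)] ≤ 1 - E[Z] ≤ exp (-E[Z])`; multiplying these bounds over
independent variables `Zᵢ = λ ℓ(h(Xᵢ), Yᵢ)` yields the claim.
-/

theorem one_le_exp_add_sq_mul_one_sub {x : ℝ} (hx : x ≤ 1 / 2) :
    1 ≤ Real.exp (x + x ^ 2) * (1 - x) := by
  have one_sub_nonneg : 0 ≤ 1 - x := by linarith
  rcases le_total x 0 with hx₀ | hx₀
  · have cube_nonpos : x ^ 3 ≤ 0 := Odd.pow_nonpos (by decide) hx₀
    calc (1 : ℝ) ≤ (x + x ^ 2 + 1) * (1 - x) := by linarith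
      _ ≤ Real.exp (x + x ^ 2) * (1 - x) := by gcongr; exact Real.add_one_le_exp _
  · have remainder_nonneg : 0 ≤ 1 - x - x ^ 2 - x ^ 3 := by
      have sq_le : x ^ 2 ≤ (1 / 2) ^ 2 := by gcongr
      have cube_le : x ^ 3 ≤ (1 / 2) ^ 3 := by gcongr
      linarith
    calc (1 : ℝ) ≤ 1 + x ^ 2 / 2 * (1 - x - x ^ 2 - x ^ 3) :=
          le_add_of_nonneg_right (by positivity)
      _ = (1 + (x + x ^ 2) + (x + x ^ 2) ^ 2 / 2) * (1 - x) := by ring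
      _ ≤ Real.exp (x + x ^ 2) * (1 - x) := by
          gcongr
          exact Real.quadratic_le_exp_of_nonneg (by positivity)

theorem exp_neg_sub_sq_le_one_sub {x : ℝ} (hx : x ≤ 1 / 2) :
    Real.exp (-x - x ^ 2) ≤ 1 - x := by
  rw [← neg_add', Real.exp_neg, inv_le_iff_one_le_mul₀' (Real.exp_pos _)]
  exact one_le_exp_add_sq_mul_one_sub hx

section

variable {Ω : Type*} [MeasurableSpace Ω] {μ : Measure Ω}

theorem integrable_exp_sum_sub_sub_sq {ι : Type*} [Fintype ι] [IsFiniteMeasure μ]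
    {Z : ι → Ω → ℝ} (hZ : ∀ i, AEMeasurable (Z i) μ) (c : ι → ℝ) :
    Integrable (fun ω ↦ Real.exp (∑ i, (c i - Z i ω - Z i ω ^ 2))) μ := by
  have exponent_le (ω : Ω) : ∑ i, (c i - Z i ω - Z i ω ^ 2) ≤ ∑ i, (c i + 1 / 4) :=
    Finset.sum_le_sum fun i _ ↦ by linarith [sq_nonneg (Z i ω + 1 / 2)]
  refine .of_bound (C := Real.exp (∑ i, (c i + 1 / 4)))
    (AEMeasurable.aestronglyMeasurable (by fun_prop)) (.of_forall fun ω ↦ ?_)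
  rw [Real.norm_of_nonneg (Real.exp_nonneg _)]
  exact Real.exp_le_exp.2 (exponent_le ω)

variable [IsProbabilityMeasure μ]

theorem integral_exp_neg_sub_sq_le_exp_neg_integral {Z : Ω → ℝ} (hint : Integrable Z μ)
    (hle : ∀ᵐ ω ∂μ, Z ω ≤ 1 / 2) :
    ∫ ω, Real.exp (-Z ω - Z ω ^ 2) ∂μ ≤ Real.exp (-μ[Z]) :=
  calc ∫ ω, Real.exp (-Z ω - Z ω ^ 2) ∂μ
    _ ≤ ∫ ω, (1 - Z ω) ∂μ :=
        integral_mono_of_nonneg (.of_forall fun _ ↦ Real.exp_nonneg _)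
          ((integrable_const 1).sub hint) (hle.mono fun _ ↦ exp_neg_sub_sq_le_one_sub)
    _ = 1 - μ[Z] := by simp [integral_sub (integrable_const 1) hint]
    _ ≤ Real.exp (-μ[Z]) := Real.one_sub_le_exp_neg _

theorem integral_exp_integral_sub_sub_sq_le_one {Z : Ω → ℝ} (hint : Integrable Z μ)
    (hle : ∀ᵐ ω ∂μ, Z ω ≤ 1 / 2) :
    ∫ ω, Real.exp (μ[Z] - Z ω - Z ω ^ 2) ∂μ ≤ 1 :=
  calc ∫ ω, Real.exp (μ[Z] - Z ω - Z ω ^ 2) ∂μ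
    _ = Real.exp μ[Z] * ∫ ω, Real.exp (-Z ω - Z ω ^ 2) ∂μ := by
        rw [← integral_const_mul]
        congr with ω
        rw [← Real.exp_add]
        ring_nf
    _ ≤ Real.exp μ[Z] * Real.exp (-μ[Z]) := by
        gcongr
        exact integral_exp_neg_sub_sq_le_exp_neg_integral hint hle
    _ = 1 := by rw [← Real.exp_add, add_neg_cancel, Real.exp_zero]

variable {ι : Type*} [Fintype ι] {Z : ι → Ω → ℝ}

theorem integral_exp_sum_integral_sub_sub_sq_le_one (hindep : iIndepFun Z μ)
    (hint : ∀ i, Integrable (Z i) μ) (hle : ∀ i, ∀ᵐ ω ∂μ, Z i ω ≤ 1 / 2) :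
    ∫ ω, Real.exp (∑ i, (μ[Z i] - Z i ω - Z i ω ^ 2)) ∂μ ≤ 1 := by
  have factors_indep : iIndepFun (fun i ω ↦ Real.exp (μ[Z i] - Z i ω - Z i ω ^ 2)) μ :=
    hindep.comp (fun i z ↦ Real.exp (∫ ω, Z i ω ∂μ - z - z ^ 2)) fun _ ↦ by fun_prop
  have factors_meas (i : ι) :
      AEStronglyMeasurable (fun ω ↦ Real.exp (μ[Z i] - Z i ω - Z i ω ^ 2)) μ :=
    have := (hint i).aemeasurable
    AEMeasurable.aestronglyMeasurable (by fun_prop)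
  simp_rw [Real.exp_sum]
  rw [factors_indep.integral_fun_prod_eq_prod_integral factors_meas]
  exact Finset.prod_le_one (fun _ _ ↦ integral_nonneg fun _ ↦ Real.exp_nonneg _)
    fun i _ ↦ integral_exp_integral_sub_sub_sq_le_one (hint i) (hle i)

theorem unexpected_bernstein_loss_mgf_general [Nonempty ι] (hindep : iIndepFun Z μ)
    (hint : ∀ i, Integrable (Z i) μ) {lam : ℝ} (hle : ∀ i, ∀ᵐ ω ∂μ, lam * Z i ω ≤ 1 / 2) :
    let N : ℝ := Fintype.card ι
    let exponent : Ω → ℝ := fun ω ↦ N *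
      (lam * (N⁻¹ * ∑ i, μ[Z i] - N⁻¹ * ∑ i, Z i ω) - lam ^ 2 * (N⁻¹ * ∑ i, Z i ω ^ 2))
    Integrable (fun ω ↦ Real.exp (exponent ω)) μ ∧ ∫ ω, Real.exp (exponent ω) ∂μ ≤ 1 := by
  intro N exponent
  have exponent_eq (ω : Ω) :
      exponent ω = ∑ i, (∫ ω', lam * Z i ω' ∂μ - lam * Z i ω - (lam * Z i ω) ^ 2) := by
    have hN : N ≠ 0 := Nat.cast_ne_zero.2 Fintype.card_ne_zero
    simp only [exponent, integral_const_mul, mul_pow, Finset.sum_sub_distrib, ← Finset.mul_sum]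
    field_simp
  have scaled_indep : iIndepFun (fun i ω ↦ lam * Z i ω) μ :=
    hindep.comp (fun _ z ↦ lam * z) fun _ ↦ measurable_const_mul lam
  have scaled_int (i : ι) : Integrable (fun ω ↦ lam * Z i ω) μ := (hint i).const_mul lam
  simp_rw [exponent_eq]
  exact ⟨integrable_exp_sum_sub_sub_sq (fun i ↦ (scaled_int i).aemeasurable) _,
    integral_exp_sum_integral_sub_sub_sq_le_one scaled_indep scaled_int hle⟩

end

/-- Let `S = ((X_1,Y_1),…,(X_n,Y_n))` be an i.i.d. sample from `D`, let `h` be a fixed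
prediction rule, and let `ℓ` be a loss function bounded above by 1. With
`L(h) = E[ℓ(h(X),Y)]`, `L̂(h,S) = (1/n) Σᵢ ℓ(h(Xᵢ),Yᵢ)` and
`V̂(h,S) = (1/n) Σᵢ ℓ(h(Xᵢ),Yᵢ)²`, for any `λ ∈ [0, 1/2]`,
`E[exp(n(λ(L(h) - L̂(h,S)) - λ² V̂(h,S)))] ≤ 1`. -/
theorem unexpected_bernstein_loss_mgf
    {Ω X Y Y' : Type*} [MeasurableSpace Ω] [MeasurableSpace X] [MeasurableSpace Y]
    (μ : Measure Ω) [IsProbabilityMeasure μ]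
    (D : Measure (X × Y)) [IsProbabilityMeasure D]
    (n : ℕ) (hn : 0 < n)
    (W : Fin n → Ω → X × Y) (hWmeas : ∀ i, Measurable (W i))
    (hindep : iIndepFun W μ)
    (hid : ∀ i, μ.map (W i) = D)
    (h : X → Y') (ℓ : Y' → Y → ℝ) (hℓle : ∀ y' y, ℓ y' y ≤ 1)
    (hℓmeas : Measurable (fun p : X × Y => ℓ (h p.1) p.2))
    (hℓint : Integrable (fun p : X × Y => ℓ (h p.1) p.2) D)
    (lam : ℝ) (hlam : lam ∈ Set.Icc (0 : ℝ) (1/2))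
    (hexpint : Integrable (fun ω => Real.exp ((n : ℝ) *
      (lam * ((∫ p, ℓ (h p.1) p.2 ∂D) - (n : ℝ)⁻¹ * ∑ i, ℓ (h (W i ω).1) (W i ω).2)
        - lam ^ 2 * ((n : ℝ)⁻¹ * ∑ i, (ℓ (h (W i ω).1) (W i ω).2) ^ 2)))) μ) :
    ∫ ω, Real.exp ((n : ℝ) *
      (lam * ((∫ p, ℓ (h p.1) p.2 ∂D) - (n : ℝ)⁻¹ * ∑ i, ℓ (h (W i ω).1) (W i ω).2)
        - lam ^ 2 * ((n : ℝ)⁻¹ * ∑ i, (ℓ (h (W i ω).1) (W i ω).2) ^ 2))) ∂μ ≤ 1 := by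
  have hmean (i : Fin n) : ∫ ω, ℓ (h (W i ω).1) (W i ω).2 ∂μ = ∫ p, ℓ (h p.1) p.2 ∂D := by
    rw [← hid i, integral_map (hWmeas i).aemeasurable hℓmeas.aestronglyMeasurable]
  have hle (p : X × Y) : lam * ℓ (h p.1) p.2 ≤ 1 / 2 :=
    (mul_le_of_le_one_right hlam.1 (hℓle _ _)).trans hlam.2
  have : Nonempty (Fin n) := ⟨⟨0, hn⟩⟩
  simpa [hmean, hn.ne'] using (unexpected_bernstein_loss_mgf_general
    (hindep.comp _ fun _ ↦ hℓmeas) (fun i ↦ (hid i ▸ hℓint).comp_measurable (hWmeas i))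
    (fun i ↦ .of_forall fun ω ↦ hle (W i ω))).2
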